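/- arXiv:2310.14302 — 6 statements merged into one kernel-verified Lean document; each statement's English description precedes it below -/
import Mathlib

section
/- For every natural number n, the type-A generalized Catalan number product formula evaluates to a Catalan number: ∏_{i=1}^{n} (i + (n+1) + 1)/(i + 1) = (1/(n+2))·C(2n+2, n+1), as an identity of rational numbers. -/
open Finset

/-!
The factor `(0 + p) / (0 + 1) = p` missing from the product completes it to the multiset coefficient
`p (p + 1) ⋯ (p + n) / (n + 1)!`, which is `(p + n).choose (n + 1)`.
-/

section Semifield

variable {K : Type*} [Semifield K] [CharZero K]

theorem prod_range_add_div_add_one_eq_multichoose (p k : ℕ) :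
    ∏ i ∈ range k, ((i : K) + p) / (i + 1) = p.multichoose k := by
  have ascFactorial_eq : p.ascFactorial k = k.factorial * p.multichoose k := by
    rw [Nat.multichoose_eq, Nat.ascFactorial_eq_factorial_mul_choose']
  have factorial_ne_zero : (k.factorial : K) ≠ 0 := mod_cast k.factorial_ne_zero
  calc ∏ i ∈ range k, ((i : K) + p) / (i + 1)
      = p.ascFactorial k / k.factorial := by
        simp only [prod_div_distrib, Nat.ascFactorial_eq_prod_range,
          ← prod_range_add_one_eq_factorial, Nat.cast_prod, Nat.cast_add, Nat.cast_one, add_comm]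
    _ = p.multichoose k := by
        rw [ascFactorial_eq, Nat.cast_mul, mul_div_cancel_left₀ _ factorial_ne_zero]

/-- For `p` coprime to the Coxeter number `h = n + 1` this is the rational Catalan number of type
`A_n` with parameter `p`; the generalized Catalan number is the case `p = h + 1`. -/
theorem typeA_catalan_product_general {p : ℕ} (hp : p ≠ 0) (n : ℕ) :
    ∏ i ∈ Icc 1 n, ((i : K) + p) / (i + 1) = (1 / (p : K)) * (n + p).choose (n + 1) := by
  have p_mul_prod : (p : K) * ∏ i ∈ Icc 1 n, ((i : K) + p) / (i + 1) = p.multichoose (n + 1) := by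
    rw [← prod_range_add_div_add_one_eq_multichoose, prod_range_eq_mul_Ico _ n.add_one_pos,
      Ico_add_one_right_eq_Icc]
    simp
  have multichoose_eq : p.multichoose (n + 1) = (n + p).choose (n + 1) := by
    rw [Nat.multichoose_eq, ← add_assoc, Nat.add_sub_cancel, add_comm]
  rw [← multichoose_eq, ← p_mul_prod, one_div, inv_mul_cancel_left₀ (Nat.cast_ne_zero.mpr hp)]

end Semifield

theorem typeA_catalan_product (n : ℕ) :
    ∏ i ∈ Finset.Icc 1 n, (((i : ℚ) + (n + 1) + 1) / (i + 1)) =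
      (1 / ((n : ℚ) + 2)) * ((2 * n + 2).choose (n + 1)) := by
  have h := typeA_catalan_product_general (K := ℚ) (n + 1).add_one_ne_zero n
  simpa [two_mul, add_assoc, one_add_one_eq_two] using h
end

section
/- For every natural number n, the type-B generalized Catalan number product formula evaluates to a central binomial coefficient: ∏_{i=1}^{n} ((2i−1) + 2n + 1)/((2i−1) + 1) = C(2n, n), as an identity of rational numbers. -/
open Finset

open scoped Nat

theorem prod_Icc_add_eq_factorial_mul_choose (n k : ℕ) :
    ∏ i ∈ Icc 1 k, (n + i) = k ! * (n + k).choose k := by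
  rw [← Nat.ascFactorial_eq_factorial_mul_choose, Nat.ascFactorial_eq_prod_range,
    ← Ico_add_one_right_eq_Icc, prod_Ico_eq_prod_range, Nat.add_sub_cancel]
  simp only [add_assoc]

theorem prod_Icc_add_div_eq_choose {K : Type*} [Semifield K] [CharZero K] (n k : ℕ) :
    ∏ i ∈ Icc 1 k, ((n : K) + i) / i = (n + k).choose k := by
  have numerators : ∏ i ∈ Icc 1 k, ((n : K) + i) = k ! * (n + k).choose k := by
    exact_mod_cast prod_Icc_add_eq_factorial_mul_choose n k
  have denominators : ∏ i ∈ Icc 1 k, (i : K) = k ! := by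
    rw [← prod_natCast, ← Ico_add_one_right_eq_Icc, prod_Ico_id_eq_factorial]
  rw [prod_div_distrib, numerators, denominators,
    mul_div_cancel_left₀ _ (Nat.cast_ne_zero.mpr k.factorial_ne_zero)]

theorem typeB_catalan_product_general {K : Type*} [Field K] [CharZero K] (n k : ℕ) :
    ∏ i ∈ Icc 1 k, ((2 * (i : K) - 1) + 2 * n + 1) / ((2 * (i : K) - 1) + 1) =
      (n + k).choose k := by
  have factor_eq (i : ℕ) :
      ((2 * (i : K) - 1) + 2 * n + 1) / ((2 * (i : K) - 1) + 1) = ((n : K) + i) / i := by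
    calc
      _ = (2 * ((n : K) + i)) / (2 * i) := by ring
      _ = (n + i) / i := mul_div_mul_left _ _ two_ne_zero
  simp only [factor_eq, prod_Icc_add_div_eq_choose]

theorem typeB_catalan_product (n : ℕ) :
    ∏ i ∈ Finset.Icc 1 n, (((2 * (i : ℚ) - 1) + 2 * n + 1) / ((2 * (i : ℚ) - 1) + 1)) =
      ((2 * n).choose n : ℚ) := by
  rw [typeB_catalan_product_general n n, two_mul]
end

section
/- Let d ≥ 2 and n, k be natural numbers. Then ∏_{i=0}^{d−1} C(k+(n+1)+i, n+1) / C((n+1)+i, n+1) = ∑_{i=0}^{k} N_A(d,n,i) · C(d(n+1)+k−i, d(n+1)), as an identity of rational numbers, where N_A(d,n,i) := N_{d,n+1,i} and N_{d,m,j} := ∑_{l=0}^{j} (−1)^{j−l} · C(dm+1, j−l) · ∏_{s=0}^{d−1} C(m+s+l, m) / C(m+s, m). -/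
open Finset

/-- The `d`-dimensional Narayana numbers `N_{d,m,j}`. -/
noncomputable def narayanaHD (d m j : ℕ) : ℚ :=
  ∑ l ∈ Finset.range (j + 1),
    (-1 : ℚ) ^ (j - l) * ((d * m + 1).choose (j - l)) *
      ∏ s ∈ Finset.range d, ((m + s + l).choose m : ℚ) / ((m + s).choose m)

/-- The type-A `d`-dimensional Narayana numbers `N_A(d,n,k) = N_{d,n+1,k}`. -/
noncomputable def narayanaA (d n k : ℕ) : ℚ := narayanaHD d (n + 1) k

/-! With `a l = ∏_{s < d} C(m+s+l, m) / C(m+s, m)`, the definition of `N_{d,m,j}` says that the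
generating function of the Narayana numbers is `(1 - X) ^ (d * m + 1)` times that of `a`. Dividing
by this power of `1 - X` and reading off coefficients recovers `a`, because the coefficients of
`(1 - X) ^ (-(M + 1))` are `C(M+r, M)`. -/

section OneSubXPow

open PowerSeries

variable {R : Type*} [CommRing R]

theorem coeff_one_sub_X_pow (D j : ℕ) :
    coeff j ((1 - X : R⟦X⟧) ^ D) = (-1) ^ j * (D.choose j : R) := by
  have eq_evalNegHom : (1 - X : R⟦X⟧) ^ D =
      evalNegHom (((1 + Polynomial.X) ^ D : Polynomial R) : R⟦X⟧) := by
    simp [sub_eq_add_neg]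
  rw [eq_evalNegHom, evalNegHom, coeff_rescale, Polynomial.coeff_coe,
    Polynomial.coeff_one_add_X_pow]

theorem coeff_mul_one_sub_X_pow (f : R⟦X⟧) (D j : ℕ) :
    coeff j (f * (1 - X) ^ D) =
      ∑ l ∈ range (j + 1), (-1) ^ (j - l) * (D.choose (j - l) : R) * coeff l f := by
  simp only [coeff_mul, Nat.sum_antidiagonal_eq_sum_range_succ_mk, coeff_one_sub_X_pow,
    mul_comm (coeff _ f)]

theorem coeff_eq_sum_coeff_mul_one_sub_X_pow (f : R⟦X⟧) (M k : ℕ) :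
    coeff k f =
      ∑ i ∈ range (k + 1), coeff i (f * (1 - X) ^ (M + 1)) * ((M + (k - i)).choose M : R) := by
  calc coeff k f
      = coeff k (f * (1 - X) ^ (M + 1) * PowerSeries.mk fun r ↦ ((M + r).choose M : R)) := by
        rw [mul_assoc, mul_comm (_ ^ _), mk_add_choose_mul_one_sub_pow_eq_one, mul_one]
    _ = ∑ i ∈ range (k + 1),
          coeff i (f * (1 - X) ^ (M + 1)) * ((M + (k - i)).choose M : R) := by
        simp only [coeff_mul _ (f * _), Nat.sum_antidiagonal_eq_sum_range_succ_mk, coeff_mk]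

end OneSubXPow

/-- MacMahon's product for the number of plane partitions in a `d × m × l` box, written as a product
of quotients of binomial coefficients. Its alternating binomial sums over `l` are the numbers
`N_{d,m,j}`. -/
noncomputable def macMahonProduct (d m l : ℕ) : ℚ :=
  ∏ s ∈ range d, ((m + s + l).choose m : ℚ) / ((m + s).choose m)

theorem mk_narayanaHD_eq (d m : ℕ) :
    PowerSeries.mk (narayanaHD d m) =
      PowerSeries.mk (macMahonProduct d m) * (1 - PowerSeries.X) ^ (d * m + 1) := by
  ext j
  simp only [coeff_mul_one_sub_X_pow, PowerSeries.coeff_mk, narayanaHD, macMahonProduct]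

theorem sulanke_identity_general (d m k : ℕ) :
    ∏ i ∈ range d, ((k + m + i).choose m : ℚ) / ((m + i).choose m) =
      ∑ i ∈ range (k + 1), narayanaHD d m i * ((d * m + (k - i)).choose (d * m) : ℚ) := by
  calc ∏ i ∈ range d, ((k + m + i).choose m : ℚ) / ((m + i).choose m)
      = macMahonProduct d m k := by simp only [macMahonProduct, add_assoc, add_comm k]
    _ = ∑ i ∈ range (k + 1), narayanaHD d m i * ((d * m + (k - i)).choose (d * m) : ℚ) := by
        simpa only [← mk_narayanaHD_eq, PowerSeries.coeff_mk] using
          coeff_eq_sum_coeff_mul_one_sub_X_pow (PowerSeries.mk (macMahonProduct d m)) (d * m) k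

theorem sulanke_identity (d n k : ℕ) (hd : 2 ≤ d) :
    ∏ i ∈ Finset.range d,
        ((k + (n + 1) + i).choose (n + 1) : ℚ) / (((n + 1) + i).choose (n + 1)) =
      ∑ i ∈ Finset.range (k + 1),
        narayanaA d n i * ((d * (n + 1) + (k - i)).choose (d * (n + 1)) : ℚ) :=
  sulanke_identity_general d (n + 1) k
end

section
/- (Li Shan-lan's identity) For all natural numbers m and n, C(m+n, n)^2 = ∑_{i=0}^{m} C(n, i)^2 · C(2n + (m−i), 2n), where C(a,b) denotes the binomial coefficient. (Since C(n,i) = 0 for i > n, the upper limit of summation may equivalently be taken to be any integer between min(m,n) and m.) -/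
open Finset

/-!
Put `S m = ∑ i ≤ m, T m i` with `T m i = C(p, i) C(q, i) C(p + q + m - i, p + q)`. The product
`C(m + p, p) C(m + q, q)` is `1` at `m = 0` and is multiplied by `(m + p + 1)(m + q + 1) / (m + 1)²`
when `m` increases by one. The sum `S` obeys the same first-order recurrence, because
`(m + 1)² T (m + 1) i - (m + p + 1)(m + q + 1) T m i` is the difference `g i - g (i + 1)` of
`g i = i² T (m + 1) i` (a Wilf–Zeilberger certificate), and the telescoped sum `g 0 - g (m + 1)`
is exactly minus the extra term `(m + 1)² T (m + 1) (m + 1)` of `(m + 1)² S (m + 1)`.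
Li Shan-lan's identity is the case `p = q = n`.
-/

lemma cast_choose_succ_mul_succ {R : Type*} [Ring R] (n k : ℕ) :
    (n.choose (k + 1) : R) * (k + 1) = n.choose k * (n - k) := by
  rcases le_or_gt k n with hk | hk
  · rw [← Nat.cast_sub hk, ← Nat.cast_mul, ← Nat.choose_succ_right_eq, Nat.cast_mul, Nat.cast_succ]
  · simp [Nat.choose_eq_zero_of_lt hk, Nat.choose_eq_zero_of_lt (hk.trans k.lt_succ_self)]

lemma add_succ_choose_mul_succ (s k : ℕ) :
    (s + (k + 1)).choose s * (k + 1) = (s + k).choose s * (s + k + 1) := by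
  have h := Nat.choose_mul_succ_eq (s + k) s
  rw [add_assoc s k 1, Nat.add_sub_cancel_left] at h
  rw [add_assoc s k 1, h]

/-- The `i`-th summand of the two-parameter Li Shan-lan sum at `m`. It is meant for `i ≤ m`:
beyond that range the truncated subtraction would turn the last factor into `1`. -/
def liShanlanTerm (p q m i : ℕ) : ℕ :=
  p.choose i * q.choose i * (p + q + (m - i)).choose (p + q)

lemma liShanlanTerm_telescope (p q : ℕ) {m i : ℕ} (hi : i ≤ m) :
    ((m : ℤ) + 1) ^ 2 * liShanlanTerm p q (m + 1) i
        - (m + p + 1) * (m + q + 1) * liShanlanTerm p q m i =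
      (i : ℤ) ^ 2 * liShanlanTerm p q (m + 1) i
        - ((i + 1 : ℕ) : ℤ) ^ 2 * liShanlanTerm p q (m + 1) (i + 1) := by
  obtain ⟨k, rfl⟩ := Nat.exists_eq_add_of_le hi
  have hp := cast_choose_succ_mul_succ (R := ℤ) p i
  have hq := cast_choose_succ_mul_succ (R := ℤ) q i
  have hpq : (p.choose (i + 1) * (i + 1) * (q.choose (i + 1) * (i + 1)) : ℤ) =
      p.choose i * (p - i) * (q.choose i * (q - i)) := by rw [hp, hq]
  have hk : ((p + q + (k + 1)).choose (p + q) * (k + 1) : ℤ) =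
      (p + q + k).choose (p + q) * (p + q + k + 1) := by
    exact_mod_cast add_succ_choose_mul_succ (p + q) k
  simp only [liShanlanTerm, add_assoc i k 1, Nat.add_sub_cancel_left,
    show i + (k + 1) - (i + 1) = k by omega]
  push_cast
  linear_combination (p.choose i * q.choose i * (2 * i + k + 1) : ℤ) * hk
    + ((p + q + k).choose (p + q) : ℤ) * hpq

lemma sum_liShanlanTerm_succ (p q m : ℕ) :
    (m + 1) ^ 2 * ∑ i ∈ range (m + 2), liShanlanTerm p q (m + 1) i =
      (m + p + 1) * (m + q + 1) * ∑ i ∈ range (m + 1), liShanlanTerm p q m i := by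
  have telescoped :
      ((m : ℤ) + 1) ^ 2 * ∑ i ∈ range (m + 1), (liShanlanTerm p q (m + 1) i : ℤ)
          - (m + p + 1) * (m + q + 1) * ∑ i ∈ range (m + 1), (liShanlanTerm p q m i : ℤ) =
        -((m + 1) ^ 2 * liShanlanTerm p q (m + 1) (m + 1)) := by
    rw [mul_sum, mul_sum, ← sum_sub_distrib,
      sum_congr rfl fun i hi ↦ liShanlanTerm_telescope p q (mem_range_succ_iff.mp hi),
      sum_range_sub' fun i : ℕ ↦ (i : ℤ) ^ 2 * liShanlanTerm p q (m + 1) i]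
    push_cast
    ring
  rw [sum_range_succ]
  zify
  linear_combination telescoped

theorem li_shanlan_identity_general (p q m : ℕ) :
    (m + p).choose p * (m + q).choose q =
      ∑ i ∈ range (m + 1), p.choose i * q.choose i * (p + q + (m - i)).choose (p + q) := by
  change _ = ∑ i ∈ range (m + 1), liShanlanTerm p q m i
  induction m with
  | zero => simp [liShanlanTerm]
  | succ m ih =>
    have hp := add_succ_choose_mul_succ p m
    have hq := add_succ_choose_mul_succ q m
    refine mul_left_cancel₀ (pow_ne_zero 2 m.succ_ne_zero) ?_
    calc (m + 1) ^ 2 * ((m + 1 + p).choose p * (m + 1 + q).choose q)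
        = (p + (m + 1)).choose p * (m + 1) * ((q + (m + 1)).choose q * (m + 1)) := by
          rw [add_comm p, add_comm q]; ring
      _ = (m + p + 1) * (m + q + 1) * ((m + p).choose p * (m + q).choose q) := by
          rw [hp, hq, add_comm p, add_comm q]; ring
      _ = (m + 1) ^ 2 * ∑ i ∈ range (m + 2), liShanlanTerm p q (m + 1) i := by
          rw [ih, sum_liShanlanTerm_succ]

theorem li_shanlan_identity (m n : ℕ) :
    ((m + n).choose n) ^ 2 =
      ∑ i ∈ Finset.range (m + 1), (n.choose i) ^ 2 * (2 * n + (m - i)).choose (2 * n) := by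
  simpa only [sq, two_mul] using li_shanlan_identity_general n n m
end

section
/- For every natural number n, the polynomial identity ∑_{k=0}^{n} C(n, k) · C(n+k, n) · (x−1)^{n−k} = ∑_{i=0}^{n} C(n, i)^2 · x^i holds in the polynomial ring ℤ[x]. (This is the Hurwitz formula (1−x)^n P_n((1+x)/(1−x)) = ∑_i C(n,i)^2 x^i combined with the explicit expansion of the Legendre polynomial P_n.) -/
open Finset Polynomial

/-!
Expand `x ^ i = (y + 1) ^ i` in powers of `y = x - 1`. The coefficient of `y ^ (n - k)` in
`∑ i, C(n, i) * C(m, i) * x ^ i` is `∑ i, C(n, i) * C(m, i) * C(i, n - k)`, and the symmetry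
`C(n, i) * C(i, n - k) = C(n, k) * C(k, n - i)` turns it into `C(n, k)` times a Vandermonde sum
for `C(m + k, n)`.
-/

/-- Both sides count the pairs of subsets of `Fin n`, of sizes `i` and `k`, that cover `Fin n`. -/
theorem choose_mul_choose_sub_comm {n i k : ℕ} (hi : i ≤ n) (hk : k ≤ n) :
    n.choose i * i.choose (n - k) = n.choose k * k.choose (n - i) := by
  obtain h | h := le_or_gt (n - k) i
  · have complement : n - i + (i - (n - k)) = k := by omega
    rw [Nat.choose_mul h, Nat.choose_symm hk, Nat.sub_sub_self hk,
      Nat.choose_symm_of_eq_add complement.symm]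
  · rw [Nat.choose_eq_zero_of_lt h, Nat.choose_eq_zero_of_lt (show k < n - i by omega),
      mul_zero, mul_zero]

theorem sum_choose_mul_choose_mul_choose_sub (m : ℕ) {n k : ℕ} (hk : k ≤ n) :
    ∑ i ∈ range (n + 1), n.choose i * m.choose i * i.choose (n - k) =
      n.choose k * (m + k).choose n := by
  rw [Nat.add_choose_eq, Nat.sum_antidiagonal_eq_sum_range_succ_mk, mul_sum]
  refine sum_congr rfl fun i hi => ?_
  rw [mul_right_comm, choose_mul_choose_sub_comm (mem_range_succ_iff.mp hi) hk]
  ring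

section Semiring

variable {R : Type*} [Semiring R]

theorem add_one_pow_eq_sum_choose_sub_mul_pow_sub (y : R) {i n : ℕ} (hi : i ≤ n) :
    (y + 1) ^ i = ∑ k ∈ range (n + 1), (i.choose (n - k) : R) * y ^ (n - k) := by
  have binomial : (y + 1) ^ i = ∑ j ∈ range (i + 1), (i.choose j : R) * y ^ j := by
    simp only [(Commute.one_right y).add_pow, one_pow, mul_one, Nat.cast_comm]
  rw [sum_flip fun j => (i.choose j : R) * y ^ j, binomial]
  refine sum_subset (range_mono (by omega)) fun j _ hj => ?_
  rw [Nat.choose_eq_zero_of_lt (by simpa using hj), Nat.cast_zero, zero_mul]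

/-- At `y = x - 1` both sides are `(1 - x) ^ n * P((1 + x) / (1 - x))` for the Jacobi polynomial
`P` of degree `n` with parameters `(0, m - n)`; the Legendre polynomial is the case `m = n`. -/
theorem hurwitz_legendre_identity_general (m n : ℕ) (y : R) :
    ∑ k ∈ range (n + 1), ((n.choose k * (m + k).choose n : ℕ) : R) * y ^ (n - k) =
      ∑ i ∈ range (n + 1), ((n.choose i * m.choose i : ℕ) : R) * (y + 1) ^ i := by
  symm
  calc ∑ i ∈ range (n + 1), ((n.choose i * m.choose i : ℕ) : R) * (y + 1) ^ i
    _ = ∑ i ∈ range (n + 1), ∑ k ∈ range (n + 1),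
          ((n.choose i * m.choose i * i.choose (n - k) : ℕ) : R) * y ^ (n - k) := by
      refine sum_congr rfl fun i hi => ?_
      rw [add_one_pow_eq_sum_choose_sub_mul_pow_sub y (mem_range_succ_iff.mp hi), mul_sum]
      simp only [Nat.cast_mul, mul_assoc]
    _ = ∑ k ∈ range (n + 1),
          ((∑ i ∈ range (n + 1), n.choose i * m.choose i * i.choose (n - k) : ℕ) : R) *
            y ^ (n - k) := by
      rw [sum_comm]
      simp only [Nat.cast_sum, sum_mul]
    _ = ∑ k ∈ range (n + 1), ((n.choose k * (m + k).choose n : ℕ) : R) * y ^ (n - k) :=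
      sum_congr rfl fun k hk => by
        rw [sum_choose_mul_choose_mul_choose_sub m (mem_range_succ_iff.mp hk)]

end Semiring

theorem hurwitz_legendre_identity (n : ℕ) :
    ∑ k ∈ Finset.range (n + 1),
        Polynomial.C ((n.choose k : ℤ) * ((n + k).choose n)) * (Polynomial.X - 1) ^ (n - k) =
      ∑ i ∈ Finset.range (n + 1),
        Polynomial.C ((n.choose i : ℤ) ^ 2) * Polynomial.X ^ i := by
  have identity := hurwitz_legendre_identity_general n n (X - 1 : ℤ[X])
  simpa [sq] using identity
end

section
/- For all natural numbers n ≥ 1 and k, one has C(k+n, n)^2 − C(k+n−1, n)^2 = ∑_{i=0}^{min(n,k)} C(n, i)^2 · C((k−i) + 2n − 1, 2n − 1), where C(a,b) denotes the binomial coefficient. (The left-hand side equals the dimension of the irreducible sl_{n+1}(ℂ)-representation with highest weight k·θ, θ the highest root.) -/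
open Finset

/-!
In terms of generating functions, the product identity
`∑ₖ C(k+m, m) C(k+n, n) tᵏ = (∑ᵢ C(m, i) C(n, i) tⁱ) / (1 - t)^(m+n+1)`
(for `m = n` due to Li Shanlan) becomes the dimension formula after multiplication by `1 - t`.
On coefficients, multiplication by `1 - t` is Pascal's rule. The product identity itself follows by
expanding `C(k+m+n-i, m+n)`, with the top index split as `(m-i) + (k+n)`, by Vandermonde's
convolution; in the resulting double sum, the sum over `i` and then the remaining one are again
Vandermonde convolutions.
-/

theorem add_choose_add_eq_sum_range {a m : ℕ} (ham : a ≤ m) (x n : ℕ) :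
    (a + x).choose (m + n) = ∑ j ∈ range (m + 1), a.choose (m - j) * x.choose (n + j) := by
  have hvanish : ∀ p ≥ m + 1, a.choose p * x.choose (m + n - p) = 0 := fun p hp ↦ by
    rw [Nat.choose_eq_zero_of_lt (by lia), zero_mul]
  rw [Nat.add_choose_eq, Nat.sum_antidiagonal_eq_sum_range_succ_mk,
    eventually_constant_sum hvanish (by lia), ← sum_range_reflect]
  refine sum_congr rfl fun j hj ↦ ?_
  have hjm : j ≤ m := mem_range_succ_iff.mp hj
  congr 2
  lia

theorem sum_range_choose_mul_choose (m x : ℕ) :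
    ∑ j ∈ range (m + 1), m.choose j * x.choose j = (m + x).choose m := by
  rw [← add_zero m, add_choose_add_eq_sum_range (by simp), add_zero]
  refine sum_congr rfl fun j hj ↦ ?_
  rw [Nat.choose_symm (mem_range_succ_iff.mp hj), zero_add]

theorem choose_mul_choose_sub_sub {j m : ℕ} (hjm : j ≤ m) (i : ℕ) :
    m.choose i * (m - i).choose (m - j) = m.choose j * j.choose i := by
  obtain hij | hji := le_or_gt i j
  · rw [Nat.choose_mul hij, Nat.choose_symm_of_eq_add (show m - i = (m - j) + (j - i) by lia)]
  · rw [Nat.choose_eq_zero_of_lt hji, mul_zero, mul_eq_zero, Nat.choose_eq_zero_iff,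
      Nat.choose_eq_zero_iff]
    lia

theorem add_choose_add_mul_add_choose (k n j : ℕ) :
    (k + n).choose (n + j) * (n + j).choose n = (k + n).choose n * k.choose j := by
  rw [Nat.choose_mul (Nat.le_add_right n j), Nat.add_sub_cancel, Nat.add_sub_cancel_left]

theorem add_choose_mul_add_choose_eq_sum (k m n : ℕ) :
    (k + m).choose m * (k + n).choose n =
      ∑ i ∈ range (m + 1), m.choose i * n.choose i * (k + m + n - i).choose (m + n) := by
  have expand : ∀ i ∈ range (m + 1),
      m.choose i * n.choose i * (k + m + n - i).choose (m + n) =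
        ∑ j ∈ range (m + 1),
          m.choose j * (k + n).choose (n + j) * (j.choose i * n.choose i) := fun i hi ↦ by
    have him : i ≤ m := mem_range_succ_iff.mp hi
    rw [show k + m + n - i = (m - i) + (k + n) by lia,
      add_choose_add_eq_sum_range (Nat.sub_le m i), mul_sum]
    refine sum_congr rfl fun j hj ↦ ?_
    linear_combination n.choose i * (k + n).choose (n + j) *
      choose_mul_choose_sub_sub (mem_range_succ_iff.mp hj) i
  have inner_sum : ∀ j ∈ range (m + 1),
      ∑ i ∈ range (m + 1), j.choose i * n.choose i = (n + j).choose n := fun j hj ↦ by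
    have hvanish : ∀ i ≥ j + 1, j.choose i * n.choose i = 0 := fun i hi ↦ by
      rw [Nat.choose_eq_zero_of_lt hi, zero_mul]
    rw [eventually_constant_sum hvanish (by grind), sum_range_choose_mul_choose, add_comm j n,
      Nat.choose_symm_add]
  symm
  calc
    _ = ∑ j ∈ range (m + 1), ∑ i ∈ range (m + 1),
          m.choose j * (k + n).choose (n + j) * (j.choose i * n.choose i) := by
      rw [sum_congr rfl expand, sum_comm]
    _ = ∑ j ∈ range (m + 1), (k + n).choose n * (m.choose j * k.choose j) := by
      refine sum_congr rfl fun j hj ↦ ?_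
      rw [← mul_sum, inner_sum j hj]
      linear_combination m.choose j * add_choose_add_mul_add_choose k n j
    _ = (k + m).choose m * (k + n).choose n := by
      rw [← mul_sum, sum_range_choose_mul_choose, add_comm m k, mul_comm]

theorem succ_add_choose_mul_succ_add_choose {m n : ℕ} (hmn : 1 ≤ m + n) (k : ℕ) :
    (k + 1 + m).choose m * (k + 1 + n).choose n =
      (k + m).choose m * (k + n).choose n +
        ∑ i ∈ range (m + 1), m.choose i * n.choose i * (k + m + n - i).choose (m + n - 1) := by
  simp only [add_choose_mul_add_choose_eq_sum, ← sum_add_distrib]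
  refine sum_congr rfl fun i hi ↦ ?_
  have him : i ≤ m := mem_range_succ_iff.mp hi
  rw [Nat.choose_eq_choose_pred_add (show 0 < k + 1 + m + n - i by lia) hmn,
    show k + 1 + m + n - i - 1 = k + m + n - i by lia]
  ring

theorem dim_VkTheta_eq_sum_general {m n : ℕ} (hmn : 1 ≤ m + n) (k : ℕ) :
    ((k + m).choose m * (k + n).choose n - (k + m - 1).choose m * (k + n - 1).choose n : ℤ) =
      ∑ i ∈ range (min m k + 1),
        (m.choose i * n.choose i * (k - i + (m + n) - 1).choose (m + n - 1) : ℤ) := by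
  cases k with
  | zero =>
    have hpred : (m - 1).choose m = 0 ∨ (n - 1).choose n = 0 := by
      simp only [Nat.choose_eq_zero_iff]
      lia
    simpa using hpred
  | succ k =>
    have hvanish : ∀ i ≥ min m (k + 1) + 1,
        m.choose i * n.choose i * (k + m + n - i).choose (m + n - 1) = 0 := fun i hi ↦ by
      obtain hmi | ⟨him, hki⟩ : m < i ∨ i ≤ m ∧ k + 1 < i := by lia
      · rw [Nat.choose_eq_zero_of_lt hmi, zero_mul, zero_mul]
      · rw [Nat.choose_eq_zero_of_lt (show k + m + n - i < m + n - 1 by lia), mul_zero]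
    rw [show k + 1 + m - 1 = k + m by lia, show k + 1 + n - 1 = k + n by lia, sub_eq_iff_eq_add']
    norm_cast
    rw [succ_add_choose_mul_succ_add_choose hmn, eventually_constant_sum hvanish (by lia)]
    congr 1
    refine sum_congr rfl fun i hi ↦ ?_
    have hik : i ≤ k + 1 := by grind
    rw [show k + 1 - i + (m + n) - 1 = k + m + n - i by lia]

theorem dim_VkTheta_eq_sum (n k : ℕ) (hn : 1 ≤ n) :
    (((k + n).choose n : ℤ) ^ 2 - ((k + n - 1).choose n : ℤ) ^ 2) =
      ∑ i ∈ Finset.range (min n k + 1),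
        ((n.choose i : ℤ)) ^ 2 * (((k - i) + 2 * n - 1).choose (2 * n - 1) : ℤ) := by
  simpa only [sq, two_mul] using dim_VkTheta_eq_sum_general (show 1 ≤ n + n by lia) k
end
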